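/- For each k ∈ ℕ₀ with P(K = k) > 0, under the conditional probability P(· | K = k) the random elements Z_0, …, Z_k are independent; moreover, for 0 ≤ j ≤ k − 1 the conditional law of Z_j is L_j conditioned on E ∖ A (i.e. L_j(· ∩ (E∖A))/L_j(E∖A)), and the conditional law of Z_k is L_k conditioned on A (i.e. L_k(· ∩ A)/L_k(A)). -/

import Mathlib

open MeasureTheory ProbabilityTheory Filter Set

/-- The event `{K = k}` where `K := inf {n : Z n ∈ A}` is the first entry time of the
sequence `Z` into `A`: the `k`-th element lies in `A` and no earlier one does. -/
def firstEntryEvent {Ω E : Type*} (Z : ℕ → Ω → E) (A : Set E) (k : ℕ) : Set Ω :=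
  {ω | Z k ω ∈ A ∧ ∀ j, j < k → Z j ω ∉ A}

/-- Conditional probability of a finite rectangle, given a product event. -/
theorem cond_rect {Ω E ι : Type*} [MeasurableSpace Ω] [mE : MeasurableSpace E] [Fintype ι]
    (P : Measure Ω) [IsProbabilityMeasure P]
    (W : ι → Ω → E) (hW : ∀ i, Measurable (W i))
    (hindep : iIndepFun (m := fun _ : ι => mE) W P)
    (B : ι → Set E) (hB : ∀ i, MeasurableSet (B i))
    (hk : P (⋂ i, W i ⁻¹' B i) ≠ 0) (S : Finset ι) (s : ι → Set E)
    (hs : ∀ i ∈ S, MeasurableSet (s i)) :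
    P[|⋂ i, W i ⁻¹' B i] (⋂ i ∈ S, W i ⁻¹' s i) =
      ∏ i ∈ S, ((P (W i ⁻¹' B i))⁻¹ * P (W i ⁻¹' (B i ∩ s i))) := by
  classical
  have hFm : MeasurableSet (⋂ i, W i ⁻¹' B i) :=
    MeasurableSet.iInter fun i => hW i (hB i)
  have key : ∀ t : ι → Set E, (∀ i, MeasurableSet (t i)) →
      P (⋂ i, W i ⁻¹' t i) = ∏ i, P (W i ⁻¹' t i) := by
    intro t ht
    have := hindep.measure_inter_preimage_eq_mul Finset.univ (sets := t) (fun i _ => ht i)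
    simpa using this
  have hne : ∀ i, P (W i ⁻¹' B i) ≠ 0 := by
    intro i h
    exact hk (measure_mono_null (iInter_subset _ i) h)
  let t : ι → Set E := fun i => if i ∈ S then B i ∩ s i else B i
  have ht : ∀ i, MeasurableSet (t i) := by
    intro i
    by_cases h : i ∈ S
    · simpa [t, h] using (hB i).inter (hs i h)
    · simpa [t, h] using hB i
  have hset : (⋂ i, W i ⁻¹' B i) ∩ (⋂ i ∈ S, W i ⁻¹' s i) = ⋂ i, W i ⁻¹' t i := by
    ext ω
    simp only [mem_inter_iff, mem_iInter, mem_preimage, t]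
    constructor
    · rintro ⟨h1, h2⟩ i
      by_cases h : i ∈ S
      · simpa [h] using ⟨h1 i, h2 i h⟩
      · simpa [h] using h1 i
    · intro h1
      refine ⟨fun i => ?_, fun i h => ?_⟩
      · have := h1 i
        by_cases h : i ∈ S
        · simp only [h, if_true] at this
          exact this.1
        · simpa [h] using this
      · have := h1 i
        simp only [h, if_true] at this
        exact this.2
  rw [cond_apply hFm, hset, key t ht, key B hB,
    ENNReal.prod_inv_distrib (fun i _ j _ _ => Or.inl (hne i)), ← Finset.prod_mul_distrib,
    ← Finset.prod_subset (Finset.subset_univ S)]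
  · refine Finset.prod_congr rfl fun i hi => ?_
    simp [t, hi]
  · intro i _ hi
    simp only [t, hi, if_false]
    exact ENNReal.inv_mul_cancel (hne i) (measure_ne_top _ _)

theorem cond_rect_indep {Ω E ι : Type*} [MeasurableSpace Ω] [mE : MeasurableSpace E] [Fintype ι]
    (P : Measure Ω) [IsProbabilityMeasure P]
    (W : ι → Ω → E) (hW : ∀ i, Measurable (W i))
    (hindep : iIndepFun (m := fun _ : ι => mE) W P)
    (B : ι → Set E) (hB : ∀ i, MeasurableSet (B i))
    (hk : P (⋂ i, W i ⁻¹' B i) ≠ 0) :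
    iIndepFun (m := fun _ : ι => mE) W (P[|⋂ i, W i ⁻¹' B i]) ∧
    ∀ i, (P[|⋂ i, W i ⁻¹' B i]).map (W i) = (P.map (W i))[|B i] := by
  have h := cond_rect P W hW hindep B hB hk
  have h1 : ∀ i (u : Set E), MeasurableSet u → P[|⋂ i, W i ⁻¹' B i] (W i ⁻¹' u) =
      (P (W i ⁻¹' B i))⁻¹ * P (W i ⁻¹' (B i ∩ u)) := by
    intro i u hu
    simpa using h {i} (fun _ => u) (fun _ _ => hu)
  refine ⟨?_, fun i => ?_⟩
  · rw [iIndepFun_iff_measure_inter_preimage_eq_mul]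
    intro S s hs
    rw [h S s hs]
    exact Finset.prod_congr rfl fun i hi => (h1 i _ (hs i hi)).symm
  · ext u hu
    rw [Measure.map_apply (hW i) hu, h1 i u hu, cond_apply (hB i),
      Measure.map_apply (hW i) (hB i), Measure.map_apply (hW i) ((hB i).inter hu)]

/-- for independent random elements `Z_0, Z_1, …` with laws `L_k`, conditionally
on `{K = k}` (where `K` is the first entry time into `A`, and provided `P(K = k) > 0`), the
elements `Z_0, …, Z_k` are independent, `Z_j` for `j < k` has conditional law `L_j` conditioned
on `Aᶜ`, and `Z_k` has conditional law `L_k` conditioned on `A`. -/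
theorem stmt17 {Ω E : Type*} [MeasurableSpace Ω] [mE : MeasurableSpace E]
    (P : Measure Ω) [IsProbabilityMeasure P]
    (Z : ℕ → Ω → E) (hZ : ∀ k, Measurable (Z k))
    (hindep : iIndepFun (m := fun _ : ℕ => mE) Z P)
    (A : Set E) (hA : MeasurableSet A) (k : ℕ)
    (hk : 0 < P (firstEntryEvent Z A k)) :
    iIndepFun (m := fun _ : Fin (k + 1) => mE) (fun j : Fin (k + 1) => Z j)
      (P[|firstEntryEvent Z A k]) ∧
    (∀ j : ℕ, j < k →
      (P[|firstEntryEvent Z A k]).map (Z j) = (P.map (Z j))[|Aᶜ]) ∧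
    (P[|firstEntryEvent Z A k]).map (Z k) = (P.map (Z k))[|A] := by
  have hset : firstEntryEvent Z A k =
      ⋂ i : Fin (k + 1), Z i ⁻¹' (if (i : ℕ) < k then Aᶜ else A) := by
    ext ω
    simp only [firstEntryEvent, mem_ofPred_eq, mem_iInter, mem_preimage]
    constructor
    · rintro ⟨h1, h2⟩ i
      by_cases h : (i : ℕ) < k
      · simpa [h] using h2 i h
      · have : (i : ℕ) = k := by omega
        simpa [this] using h1
    · intro h
      refine ⟨by simpa using h (Fin.last k), fun j hj => ?_⟩
      simpa [hj] using h ⟨j, by omega⟩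
  rw [hset] at hk ⊢
  obtain ⟨h1, h2⟩ := cond_rect_indep P (fun i : Fin (k + 1) => Z i) (fun i => hZ i)
    (hindep.precomp Fin.val_injective) (fun i => if (i : ℕ) < k then Aᶜ else A)
    (fun i => by split_ifs; exacts [hA.compl, hA]) hk.ne'
  refine ⟨h1, fun j hj => ?_, ?_⟩
  · have := h2 ⟨j, by omega⟩
    simpa only [hj, if_true] using this
  · have := h2 (Fin.last k)
    simpa only [Fin.val_last, lt_irrefl, if_false] using this
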